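/- Define a : ℕ → ℕ by a(0) = 1 and a(i+1) = 10^{a(i)}, and let c = ∑_{i=0}^∞ 10^{-a(i)} (a real number). Then for every k ∈ ℕ, |c − ∑_{i=0}^k 10^{-a(i)}| < 2 · 10^{-10^{a(k)}}. -/

import Mathlib

/-! Strict monotonicity of the exponents lets a geometric series with first term `b ^ (-a (k + 1))`
and ratio `b⁻¹` dominate the tail of the series. Since `(1 - b⁻¹)⁻¹ ≤ 2`, this gives the bound with
`≤`; it is strict because the exponents grow faster than linearly. -/

section LacunaryGeometricSeries

variable {r : ℝ} {f : ℕ → ℕ}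

theorem summable_pow_of_strictMono (hr₀ : 0 ≤ r) (hr₁ : r < 1) (hf : StrictMono f) :
    Summable fun i ↦ r ^ f i :=
  (summable_geometric_of_lt_one hr₀ hr₁).comp_injective hf.injective

theorem tsum_pow_lt_of_strictMono (hr₀ : 0 < r) (hr₁ : r < 1) (hf : StrictMono f) {j : ℕ}
    (hj : f 0 + j < f j) : ∑' i, r ^ f i < r ^ f 0 * (1 - r)⁻¹ := by
  have hgeom : Summable fun i ↦ r ^ (f 0 + i) := by
    simpa only [pow_add] using (summable_geometric_of_lt_one hr₀.le hr₁).mul_left (r ^ f 0)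
  have hle (i : ℕ) : r ^ f i ≤ r ^ (f 0 + i) :=
    pow_le_pow_of_le_one hr₀.le hr₁.le (add_comm i (f 0) ▸ hf.add_le_nat i 0)
  have hlt : r ^ f j < r ^ (f 0 + j) := pow_lt_pow_right_of_lt_one₀ hr₀ hr₁ hj
  calc
    ∑' i, r ^ f i < ∑' i, r ^ (f 0 + i) :=
      Summable.tsum_lt_tsum hle hlt (summable_pow_of_strictMono hr₀.le hr₁ hf) hgeom
    _ = r ^ f 0 * (1 - r)⁻¹ := by
      simp only [pow_add, tsum_mul_left, tsum_geometric_of_lt_one hr₀.le hr₁]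

theorem abs_tsum_pow_sub_sum_range_lt_of_strictMono (hr₀ : 0 < r) (hr₁ : r < 1)
    (hf : StrictMono f) {n j : ℕ} (hj : f n + j < f (n + j)) :
    |∑' i, r ^ f i - ∑ i ∈ Finset.range n, r ^ f i| < r ^ f n * (1 - r)⁻¹ := by
  have htail : ∑' i, r ^ f i - ∑ i ∈ Finset.range n, r ^ f i = ∑' i, r ^ f (n + i) := by
    rw [← (summable_pow_of_strictMono hr₀.le hr₁ hf).sum_add_tsum_nat_add n, add_sub_cancel_left]
    simp only [add_comm]
  rw [htail, abs_of_nonneg (tsum_nonneg fun i ↦ by positivity)]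
  exact tsum_pow_lt_of_strictMono (f := fun i ↦ f (n + i)) hr₀ hr₁
    (hf.comp (add_right_strictMono (a := n))) hj

end LacunaryGeometricSeries

theorem add_one_lt_pow_of_two_le {b n : ℕ} (hb : 2 ≤ b) (hn : 2 ≤ n) : n + 1 < b ^ n := by
  induction n, hn using Nat.le_induction with
  | base => nlinarith
  | succ n _ ih => rw [pow_succ]; nlinarith

section PowerTower

variable {b : ℕ} {a : ℕ → ℕ}

theorem strictMono_of_succ_eq_pow (hb : 2 ≤ b) (ha : ∀ i, a (i + 1) = b ^ a i) : StrictMono a :=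
  strictMono_nat_of_lt_succ fun i ↦ ha i ▸ Nat.lt_pow_self hb

theorem apply_add_two_lt_of_succ_eq_pow (hb : 2 ≤ b) (ha : ∀ i, a (i + 1) = b ^ a i) (k : ℕ) :
    a (k + 1) + 2 < a (k + 1 + 2) := by
  have hmono := strictMono_of_succ_eq_pow hb ha
  have h₁ : a k < a (k + 1) := hmono k.lt_succ_self
  have h₂ : a (k + 1) < a (k + 2) := hmono (k + 1).lt_succ_self
  have h₃ : a (k + 2) + 1 < a (k + 3) :=
    ha (k + 2) ▸ add_one_lt_pow_of_two_le hb (by lia)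
  calc
    a (k + 1) + 2 ≤ a (k + 2) + 1 := by lia
    _ < a (k + 3) := h₃

end PowerTower

theorem stmt_1_general {b : ℕ} (hb : 2 ≤ b) (a : ℕ → ℕ) (ha : ∀ i, a (i + 1) = b ^ a i)
    (c : ℝ) (hc : c = ∑' i : ℕ, (b : ℝ) ^ (-(a i : ℤ))) (k : ℕ) :
    |c - ∑ i ∈ Finset.range (k + 1), (b : ℝ) ^ (-(a i : ℤ))| <
      2 * (b : ℝ) ^ (-((b : ℤ) ^ a k)) := by
  have hb' : (2 : ℝ) ≤ b := mod_cast hb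
  have hr₀ : 0 < (b : ℝ)⁻¹ := by positivity
  have hr₂ : (b : ℝ)⁻¹ ≤ 2⁻¹ := inv_anti₀ two_pos hb'
  have hr₁ : (b : ℝ)⁻¹ < 1 := by linarith
  have hratio : (1 - (b : ℝ)⁻¹)⁻¹ ≤ 2 := inv_le_of_inv_le₀ two_pos (by linarith)
  have hexp : (b : ℤ) ^ a k = a (k + 1) := mod_cast (ha k).symm
  simp only [hc, hexp, ← inv_zpow', zpow_natCast]
  calc
    _ < (b : ℝ)⁻¹ ^ a (k + 1) * (1 - (b : ℝ)⁻¹)⁻¹ :=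
      abs_tsum_pow_sub_sum_range_lt_of_strictMono hr₀ hr₁ (strictMono_of_succ_eq_pow hb ha)
        (apply_add_two_lt_of_succ_eq_pow hb ha k)
    _ ≤ (b : ℝ)⁻¹ ^ a (k + 1) * 2 := by gcongr
    _ = 2 * (b : ℝ)⁻¹ ^ a (k + 1) := mul_comm _ _

theorem stmt_1 (a : ℕ → ℕ) (ha0 : a 0 = 1) (ha : ∀ i, a (i + 1) = 10 ^ a i)
    (c : ℝ) (hc : c = ∑' i : ℕ, (10 : ℝ) ^ (-(a i : ℤ))) (k : ℕ) :
    |c - ∑ i ∈ Finset.range (k + 1), (10 : ℝ) ^ (-(a i : ℤ))| <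
      2 * (10 : ℝ) ^ (-((10 : ℤ) ^ a k)) :=
  stmt_1_general (b := 10) (by norm_num) a ha c hc k
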